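/- arXiv:2301.09699 — 2 statements merged into one kernel-verified Lean document; each statement's English description precedes it below -/
import Mathlib

section
/- For every real number x > 0, the sequence of partial products P_N = ∏_{n=1}^N ∏_{k=1}^n (k!)^{(-1)^{k+n} · C(x,n) · C(n,k)} converges as N → ∞, and (1/x) · lim_{N→∞} P_N = Γ(x), where Γ is the real Gamma function and the exponentiation is the real power (k!)^t = exp(t·ln(k!)). -/
/-- The generalized binomial coefficient `C(x, n) = x (x-1) ⋯ (x-n+1) / n!`. -/
noncomputable def genBinom (x : ℝ) (n : ℕ) : ℝ :=
  (∏ i ∈ Finset.range n, (x - i)) / (Nat.factorial n : ℝ)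

open Finset Filter Topology in
theorem genBinom_succ (x : ℝ) (n : ℕ) :
    genBinom x (n+1) * (n+1) = genBinom x n * (x - n) := by
  have h : (n.factorial : ℝ) ≠ 0 := by positivity
  have h2 : (n + 1 : ℝ) ≠ 0 := by positivity
  unfold genBinom
  rw [Finset.prod_range_succ, Nat.factorial_succ]
  push_cast
  field_simp

open Finset Filter Topology in
theorem genBinom_tendsto (x : ℝ) (hx : 0 < x) :
    Tendsto (fun n => |genBinom x n|) atTop (𝓝 0) := by
  obtain ⟨M, hM⟩ := exists_nat_ge x
  have key : ∀ n, M ≤ n → n * |genBinom x n| ≤ M * |genBinom x M| := by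
    intro n hn
    induction n, hn using Nat.le_induction with
    | base => exact le_rfl
    | succ n hn ih =>
      refine le_trans ?_ ih
      have h1 := congrArg abs (genBinom_succ x n)
      rw [abs_mul, abs_mul, abs_of_nonneg (by positivity : (0:ℝ) ≤ n + 1)] at h1
      push_cast
      rw [mul_comm, h1, mul_comm]
      have : (M : ℝ) ≤ n := by exact_mod_cast hn
      gcongr
      rw [abs_le]; constructor <;> linarith
  refine tendsto_of_tendsto_of_tendsto_of_le_of_le' tendsto_const_nhds
    (tendsto_const_div_atTop_nhds_zero_nat (M * |genBinom x M|)) ?_ ?_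
  · exact Eventually.of_forall fun n => abs_nonneg _
  · filter_upwards [eventually_ge_atTop M, eventually_ge_atTop 1] with n h1 h2
    have : (0:ℝ) < n := by exact_mod_cast h2
    rw [le_div_iff₀ this, mul_comm]
    exact key n h1

/-- n-th forward difference at zero, as an explicit sum -/
noncomputable def dd (n : ℕ) (f : ℝ → ℝ) : ℝ :=
  ∑ k ∈ Finset.range (n+1), (-1 : ℝ) ^ (k + n) * (Nat.choose n k : ℝ) * f k

theorem dd_succ (n : ℕ) (f : ℝ → ℝ) : dd (n+1) f = dd n (fun y => f (y+1)) - dd n f := by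
  unfold dd
  rw [Finset.sum_range_succ', Finset.sum_range_succ' (n := n) (f := fun k => (-1 : ℝ) ^ (k + n) * (Nat.choose n k : ℝ) * f k)]
  have : ∑ k ∈ Finset.range n, (-1 : ℝ) ^ (k + 1 + n) * (Nat.choose n (k+1) : ℝ) * f (k+1 : ℕ)
    = ∑ k ∈ Finset.range (n+1), (-1 : ℝ) ^ (k + 1 + n) * (Nat.choose n (k+1) : ℝ) * f (k+1 : ℕ) := by
    rw [Finset.sum_range_succ]; simp
  rw [this, ← sub_sub, ← Finset.sum_sub_distrib]
  have h2 : ∀ k ∈ Finset.range (n+1), (-1 : ℝ) ^ (k + 1 + (n+1)) * (Nat.choose (n+1) (k+1) : ℝ) * f (k+1 : ℕ)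
    = (-1 : ℝ) ^ (k + n) * (Nat.choose n k : ℝ) * f (k + 1) -
     (-1 : ℝ) ^ (k + 1 + n) * (Nat.choose n (k+1) : ℝ) * f (k+1 : ℕ) := by
    intro k _
    rw [Nat.choose_succ_succ]
    push_cast
    ring
  rw [Finset.sum_congr rfl h2]
  simp
  ring

theorem dd_zero (f : ℝ → ℝ) : dd 0 f = f 0 := by simp [dd]

theorem dd_const (n : ℕ) (c : ℝ) : dd (n+1) (fun _ => c) = 0 := by
  rw [dd_succ]; simp

theorem dd_lin (n : ℕ) (c : ℝ) : dd (n+2) (fun y => (y + 1) * c) = 0 := by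
  rw [dd_succ]
  have : ∀ g h : ℝ → ℝ, dd (n+1) g - dd (n+1) h = dd (n+1) (fun y => g y - h y) := by
    intro g h; simp only [dd, ← Finset.sum_sub_distrib, mul_sub]
  rw [this, ← dd_const n c]
  congr 1; ext y; ring

/-- reciprocal of rising factorial -/
noncomputable def gg (n : ℕ) (a : ℝ) : ℝ := 1 / ∏ i ∈ Finset.range n, (a + i)

theorem gg_pos (n : ℕ) (a : ℝ) (ha : 0 < a) : 0 < gg n a := by
  unfold gg
  have : 0 < ∏ i ∈ Finset.range n, (a + i) := Finset.prod_pos fun i _ => by positivity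
  positivity

theorem gg_succ (n : ℕ) (a : ℝ) : gg (n+1) a = gg n a / (a + n) := by
  unfold gg; rw [Finset.prod_range_succ, div_div]

theorem gg_succ' (n : ℕ) (a : ℝ) : gg (n+1) a = gg n (a+1) / a := by
  unfold gg; rw [Finset.prod_range_succ', div_div]
  congr 1; push_cast; rw [add_zero]; congr 1
  exact Finset.prod_congr rfl fun i _ => by ring

theorem gg_anti (n : ℕ) (a b : ℝ) (ha : 0 < a) (hab : a ≤ b) : gg n b ≤ gg n a := by
  unfold gg
  have : 0 < ∏ i ∈ Finset.range n, (a + i) := Finset.prod_pos fun i _ => by positivity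
  gcongr

theorem gg_tele (n : ℕ) (a : ℝ) (ha : 0 < a) :
    gg (n+1) a * n = gg n a - gg n (a+1) := by
  have h1 := gg_succ n a
  have h2 := gg_succ' n a
  have : a + n ≠ 0 := by positivity
  rw [eq_div_iff this] at h1
  rw [eq_div_iff ha.ne'] at h2
  linarith

theorem gg_one (n : ℕ) : gg n 1 = 1 / n.factorial := by
  unfold gg
  rw [← Finset.prod_range_add_one_eq_factorial]
  push_cast
  congr 1
  exact Finset.prod_congr rfl fun i _ => by ring

theorem dd_inv (n : ℕ) (a : ℝ) (ha : 0 < a) :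
    dd n (fun y => 1 / (y + a)) = (-1)^n * n.factorial * gg (n+1) a := by
  induction n generalizing a with
  | zero => simp [dd_zero, gg]
  | succ n ih =>
    rw [dd_succ, ih a ha]
    have : (fun y : ℝ => 1 / (y + 1 + a)) = fun y => 1 / (y + (a+1)) := by
      ext y; congr 1; ring
    rw [this, ih (a+1) (by linarith), Nat.factorial_succ]
    have := gg_tele (n+1) a ha
    push_cast at this ⊢
    rw [pow_succ]
    linear_combination (-1)^n * (n.factorial : ℝ) * this

/-- Newton remainder -/
noncomputable def rr (x : ℝ) (N : ℕ) (f : ℝ → ℝ) : ℝ :=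
  f x - ∑ n ∈ Finset.range N, genBinom x n * dd n f

theorem rr_inv (x : ℝ) (hx : 0 < x) (N : ℕ) (a : ℝ) (ha : 0 < a) :
    rr x N (fun y => 1 / (y + a)) = (-1)^N * (∏ i ∈ Finset.range N, (x - i)) * gg N a / (x + a) := by
  induction N with
  | zero => simp [rr, gg]
  | succ N ih =>
    have : rr x (N+1) (fun y => 1 / (y + a)) = rr x N (fun y => 1 / (y + a)) -
       genBinom x N * dd N (fun y => 1 / (y + a)) := by
      unfold rr; rw [Finset.sum_range_succ]; ring
    rw [this, ih, dd_inv _ _ ha, Finset.prod_range_succ, gg_succ, genBinom]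
    have h1 : x + a ≠ 0 := by positivity
    have h2 : a + N ≠ 0 := by positivity
    have h3 : (N.factorial : ℝ) ≠ 0 := by positivity
    field_simp
    ring

theorem rr_sub (x : ℝ) (N : ℕ) (f g : ℝ → ℝ) :
    rr x N (fun y => f y - g y) = rr x N f - rr x N g := by
  simp only [rr, dd, mul_sub, Finset.sum_sub_distrib]; ring

theorem rr_add (x : ℝ) (N : ℕ) (f g : ℝ → ℝ) :
    rr x N (fun y => f y + g y) = rr x N f + rr x N g := by
  simp only [rr, dd, mul_add, Finset.sum_add_distrib]; ring

theorem rr_sum (x : ℝ) (N M : ℕ) (f : ℕ → ℝ → ℝ) :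
    rr x N (fun y => ∑ m ∈ Finset.range M, f m y) = ∑ m ∈ Finset.range M, rr x N (f m) := by
  induction M with
  | zero => simp [rr, dd]
  | succ M ih => simp only [Finset.sum_range_succ, rr_add, ih]

theorem rr_const (x : ℝ) (N : ℕ) (c : ℝ) : rr x (N+1) (fun _ => c) = 0 := by
  unfold rr
  rw [Finset.sum_range_succ']
  simp [dd_const, dd_zero, genBinom]

theorem rr_lin (x : ℝ) (N : ℕ) (c : ℝ) : rr x (N+2) (fun y => (y+1) * c) = 0 := by
  unfold rr
  rw [Finset.sum_range_succ', Finset.sum_range_succ']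
  simp [dd_lin, dd_zero, genBinom]
  simp [dd_succ, dd_zero]
  ring

open Filter Topology in
theorem rr_tendsto {ι : Type*} (l : Filter ι) (x : ℝ) (hx : 0 < x) (N : ℕ) (F : ι → ℝ → ℝ) (f : ℝ → ℝ)
    (h : ∀ y, 0 ≤ y → Tendsto (fun i => F i y) l (𝓝 (f y))) :
    Tendsto (fun i => rr x N (F i)) l (𝓝 (rr x N f)) := by
  unfold rr dd
  refine (h x hx.le).sub (tendsto_finsetSum _ fun n _ => ?_)
  refine Tendsto.const_mul _ (tendsto_finsetSum _ fun k _ => ?_)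
  exact (h k (by positivity)).const_mul _

theorem rr_deriv (x : ℝ) (hx : 0 < x) (N : ℕ) (a : ℝ) (ha : 0 < a) :
    HasDerivAt (fun a => rr x N (fun y => Real.log (y + a)))
      (rr x N (fun y => 1 / (y + a))) a := by
  have h : ∀ y : ℝ, 0 ≤ y → HasDerivAt (fun a => Real.log (y + a)) (1 / (y + a)) a := by
    intro y hy
    exact ((hasDerivAt_id a).const_add y).log (by simp; positivity)
  unfold rr dd
  refine (h x hx.le).sub (HasDerivAt.fun_sum fun n _ => ?_)
  refine HasDerivAt.const_mul _ (HasDerivAt.fun_sum fun k _ => ?_)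
  exact (h k (by positivity)).const_mul _

theorem rr_step (x : ℝ) (hx : 0 < x) (N : ℕ) (a : ℝ) (ha : 1 ≤ a) :
    |rr x N (fun y => Real.log (y + (a+1))) - rr x N (fun y => Real.log (y + a))|
      ≤ |∏ i ∈ Finset.range N, (x - i)| * gg N a := by
  have := Convex.norm_image_sub_le_of_norm_hasDerivWithin_le (s := Set.Icc a (a+1))
    (f := fun a => rr x N (fun y => Real.log (y + a)))
    (f' := fun a => rr x N (fun y => 1 / (y + a)))
    (C := |∏ i ∈ Finset.range N, (x - i)| * gg N a) (x := a) (y := a+1)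
    (fun b hb => (rr_deriv x hx N b (by linarith [hb.1])).hasDerivWithinAt)
    (fun b hb => by
      have hb0 : 0 < b := by linarith [hb.1]
      rw [rr_inv x hx N b hb0]
      rw [Real.norm_eq_abs, abs_div, abs_mul, abs_mul, abs_pow, abs_neg, abs_one, one_pow, one_mul,
        abs_of_pos (gg_pos N b hb0), abs_of_pos (by positivity : 0 < x + b)]
      have h1 := gg_anti N a b (by linarith) hb.1
      have h2 := gg_pos N b hb0
      refine (div_le_self (by positivity) (by linarith [hb.1])).trans ?_
      gcongr) (convex_Icc _ _) (by simp) (by simp)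
  simpa using this

open Filter Topology in
theorem rr_log_bound (x : ℝ) (hx : 0 < x) (N : ℕ) (a : ℝ) (ha : 1 ≤ a) :
    |rr x (N+2) (fun y => Real.log (y + a))|
      ≤ |∏ i ∈ Finset.range (N+2), (x - i)| * gg (N+1) a / (N+1) := by
  set K := |∏ i ∈ Finset.range (N+2), (x - i)| with hK
  have hK0 : 0 ≤ K := abs_nonneg _
  have step : ∀ k : ℕ, |rr x (N+2) (fun y => Real.log (y + (a+k))) - rr x (N+2) (fun y => Real.log (y + a))|
      ≤ K * (gg (N+1) a - gg (N+1) (a+k)) / (N+1) := by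
    intro k
    induction k with
    | zero => simp
    | succ k ih =>
      have h1 := rr_step x hx (N+2) (a+k) (by linarith [(Nat.cast_nonneg k : (0:ℝ) ≤ k)])
      have h2 := gg_tele (N+1) (a+k) (by positivity)
      push_cast at h2 ⊢
      rw [add_assoc a] at h2 h1
      rw [← hK] at h1
      have h3 : gg (N+2) (a+k) = (gg (N+1) (a+k) - gg (N+1) (a+(k+1))) / (N+1) := by
        rw [eq_div_iff (by positivity)]; exact h2
      rw [h3] at h1
      refine (abs_sub_le _ (rr x (N+2) (fun y => Real.log (y + (a+k)))) _).trans ?_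
      refine (add_le_add h1 ih).trans (le_of_eq ?_)
      ring
  have lim : Tendsto (fun k : ℕ => rr x (N+2) (fun y => Real.log (y + (a+k)))) atTop (𝓝 0) := by
    have h0 : rr x (N+2) (fun _ => 0) = 0 := rr_const x (N+1) 0
    have e : ∀ k : ℕ, rr x (N+2) (fun y => Real.log (y + (a+k))) =
        rr x (N+2) (fun y => Real.log ((a+k) + y) - Real.log (a + k)) := by
      intro k
      rw [rr_sub, rr_const x (N+1), sub_zero]
      simp only [add_comm]
    simp_rw [e]
    rw [← h0]
    refine rr_tendsto atTop x hx (N+2) _ _ fun y _ => ?_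
    exact (Real.tendsto_log_comp_add_sub_log y).comp
      (tendsto_atTop_add_const_left _ a tendsto_natCast_atTop_atTop)
  have lim2 := (lim.sub_const (rr x (N+2) (fun y => Real.log (y + a)))).abs
  rw [zero_sub, abs_neg] at lim2
  refine le_of_tendsto lim2 (Eventually.of_forall fun k => (step k).trans ?_)
  have := gg_pos (N+1) (a+k) (by positivity)
  gcongr
  linarith

open Filter Topology in
theorem rr_gamma_bound (x : ℝ) (hx : 0 < x) (p : ℕ) :
    |rr x (p+3) (fun y => Real.log (Real.Gamma (y + 1)))| ≤ 3 * |genBinom x (p+3)| := by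
  have lim : Tendsto (fun M => rr x (p+3) (fun y => Real.BohrMollerup.logGammaSeq (y+1) M)) atTop
      (𝓝 (rr x (p+3) (fun y => Real.log (Real.Gamma (y + 1))))) :=
    rr_tendsto atTop x hx (p+3) _ _ fun y hy =>
      Real.BohrMollerup.tendsto_log_gamma (by linarith)
  refine le_of_tendsto lim.abs (Eventually.of_forall fun M => ?_)
  unfold Real.BohrMollerup.logGammaSeq
  rw [rr_sub, rr_add, rr_const x (p+2), rr_lin x (p+1), rr_sum, zero_add, zero_sub, abs_neg]
  set K := |∏ i ∈ Finset.range (p+3), (x - i)| with hK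
  have hK0 : 0 ≤ K := abs_nonneg _
  have b : ∀ M : ℕ, |∑ m ∈ Finset.range M, rr x (p+3) (fun y => Real.log (y + 1 + m))| ≤
      K * (gg (p+1) 1 - gg (p+1) (1+M)) / ((p+2)*(p+1)) := by
    intro M
    induction M with
    | zero => simp
    | succ M ih =>
      rw [Finset.sum_range_succ]
      refine (abs_add_le _ _).trans ?_
      have h1 := rr_log_bound x hx (p+1) (1+M) (by linarith [(Nat.cast_nonneg M : (0:ℝ) ≤ M)])
      have h2 := gg_tele (p+1) (1+M) (by positivity)
      have h3 : gg (p+2) (1+M) = (gg (p+1) (1+M) - gg (p+1) (1+(M+1))) / (p+1) := by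
        rw [eq_div_iff (by positivity), ← add_assoc]; exact_mod_cast h2
      simp only [add_assoc] at h1 ih ⊢
      norm_num at h1 
      rw [← hK, h3] at h1
      refine (add_le_add ih h1).trans (le_of_eq ?_)
      push_cast
      field_simp
      ring
  refine (b (M+1)).trans ?_
  have hg := gg_pos (p+1) (1+(M+1:ℕ)) (by positivity)
  have hK2 : K = (p+3).factorial * |genBinom x (p+3)| := by
    unfold genBinom
    rw [abs_div, abs_of_nonneg (by positivity : (0:ℝ) ≤ ((p+3).factorial : ℝ))]
    field_simp
    exact hK
  calc _ ≤ K * gg (p+1) 1 / ((p+2)*(p+1)) := by gcongr; linarith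
    _ = (p+3) / (p+1) * |genBinom x (p+3)| := by
      rw [gg_one, hK2, Nat.factorial_succ (p+2), Nat.factorial_succ (p+1)]
      have : ((p+1).factorial : ℝ) ≠ 0 := by positivity
      push_cast
      field_simp
      ring
    _ ≤ _ := by
      gcongr
      rw [div_le_iff₀ (by positivity)]
      linarith [(Nat.cast_nonneg p : (0:ℝ) ≤ p)]

open Filter Topology in
theorem newton_tendsto (x : ℝ) (hx : 0 < x) :
    Tendsto (fun N => ∑ n ∈ Finset.range N, genBinom x n *
      dd n (fun y => Real.log (Real.Gamma (y + 1)))) atTop (𝓝 (Real.log (Real.Gamma (x + 1)))) := by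
  rw [← tendsto_add_atTop_iff_nat 3, tendsto_iff_norm_sub_tendsto_zero]
  have h := (((tendsto_add_atTop_iff_nat 3).2 (genBinom_tendsto x hx)).const_mul 3)
  rw [mul_zero] at h
  refine squeeze_zero (fun _ => norm_nonneg _) (fun p => ?_) h
  rw [Real.norm_eq_abs, abs_sub_comm]
  exact rr_gamma_bound x hx p

theorem dd_gamma (n : ℕ) : dd n (fun y => Real.log (Real.Gamma (y + 1))) =
    ∑ k ∈ Finset.Icc 1 n, (-1 : ℝ) ^ (k + n) * (Nat.choose n k : ℝ) * Real.log (k.factorial) := by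
  unfold dd
  simp only [Real.Gamma_nat_eq_factorial]
  rw [Finset.range_eq_Ico, Finset.sum_eq_sum_Ico_succ_bot (by omega)]
  simp
  rfl

theorem gamma_product_representation (x : ℝ) (hx : 0 < x) :
    ∃ P : ℝ,
      Filter.Tendsto
        (fun N => ∏ n ∈ Finset.Icc 1 N, ∏ k ∈ Finset.Icc 1 n,
          (Nat.factorial k : ℝ) ^ ((-1 : ℝ) ^ (k + n) * genBinom x n * (Nat.choose n k : ℝ)))
        Filter.atTop (nhds P) ∧
      (1 / x) * P = Real.Gamma x := by
  have hG : 0 < Real.Gamma (x+1) := Real.Gamma_pos_of_pos (by linarith)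
  refine ⟨Real.Gamma (x+1), ?_, by rw [Real.Gamma_add_one hx.ne']; field_simp⟩
  have h := (Real.continuous_exp.tendsto _).comp
    ((Filter.tendsto_add_atTop_iff_nat 1).2 (newton_tendsto x hx))
  rw [Real.exp_log hG] at h
  refine h.congr fun N => ?_
  simp only [Function.comp]
  rw [Finset.range_eq_Ico, Finset.sum_eq_sum_Ico_succ_bot (by omega), dd_zero]
  simp only [zero_add, Real.Gamma_one, Real.log_one, mul_zero]
  rw [Real.exp_sum]
  refine Finset.prod_congr rfl fun n _ => ?_
  rw [dd_gamma, Finset.mul_sum, Real.exp_sum]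
  refine Finset.prod_congr rfl fun k _ => ?_
  rw [Real.rpow_def_of_pos (by positivity)]
  congr 1
  ring
end

section
/- For every real number x > 0, the series ∑_{n=2}^∞ ∫_0^∞ C(x,n) · (e^{-t}/t) · (e^{-t} - 1)^{n-1} dt converges (each integral existing), and its sum equals -ln Γ(x+1), where Γ is the real Gamma function. -/
open MeasureTheory Filter Topology Set

lemma hs_genBinom_succ (x : ℝ) (n : ℕ) :
    genBinom x (n + 1) * (n + 1) = genBinom x n * (x - n) := by
  have h : (Nat.factorial n : ℝ) ≠ 0 := by positivity
  have h' : (n : ℝ) + 1 ≠ 0 := by positivity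
  simp only [genBinom, Finset.prod_range_succ, Nat.factorial_succ]
  push_cast
  field_simp

lemma hs_genBinom_eq (x : ℝ) (n : ℕ) : genBinom x n = Ring.choose x n := by
  induction n with
  | zero => simp [genBinom]
  | succ n ih =>
    have h' : (n : ℝ) + 1 ≠ 0 := by positivity
    apply mul_right_cancel₀ h'
    rw [hs_genBinom_succ, ih, Ring.choose_eq_smul, Ring.choose_eq_smul]
    have h : (Nat.factorial n : ℝ) ≠ 0 := by positivity
    rw [descPochhammer_succ_right, Polynomial.smeval_mul]
    simp only [Polynomial.smeval_sub, Polynomial.smeval_X, Polynomial.smeval_natCast,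
      Nat.factorial_succ, smul_eq_mul]
    push_cast
    field_simp
    simp

lemma hs_summable (x : ℝ) (hx : 0 < x) : Summable (fun n => |genBinom x n|) := by
  obtain ⟨M, hM⟩ := exists_nat_ge x
  rw [← summable_nat_add_iff M]
  have key : ∀ n : ℕ, x * |genBinom x (n + M)| =
      (n + M : ℝ) * |genBinom x (n + M)| - (n + M + 1) * |genBinom x (n + M + 1)| := by
    intro n
    have h := congrArg abs (hs_genBinom_succ x (n + M))
    rw [abs_mul, abs_mul, abs_of_nonneg (by positivity : (0:ℝ) ≤ ((n + M : ℕ) : ℝ) + 1),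
      abs_of_nonpos (by push_cast; linarith [(Nat.cast_nonneg n : (0:ℝ) ≤ n)] :
        x - ((n + M : ℕ) : ℝ) ≤ 0)] at h
    push_cast at h
    linarith
  have tele : ∀ N : ℕ, ∑ n ∈ Finset.range N, x * |genBinom x (n + M)| =
      M * |genBinom x M| - (N + M : ℝ) * |genBinom x (N + M)| := by
    intro N
    induction N with
    | zero => simp
    | succ N ih =>
      rw [Finset.sum_range_succ, ih, key, show N + 1 + M = N + M + 1 by ring]
      push_cast
      ring
  apply (summable_mul_left_iff hx.ne').1
  apply summable_of_sum_range_le (c := M * |genBinom x M|)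
  · intro n; positivity
  · intro N
    rw [tele]
    have : 0 ≤ (N + M : ℝ) * |genBinom x (N + M)| := by positivity
    linarith

/-- The summed integrand. -/
noncomputable def hsH (x t : ℝ) : ℝ :=
  (Real.exp (-t) / t) * ((Real.exp (-(x * t)) - 1) / (Real.exp (-t) - 1) - x)

lemma hs_u (t : ℝ) (ht : 0 < t) :
    |Real.exp (-t) - 1| < 1 ∧ |Real.exp (-t) - 1| ≤ t ∧ Real.exp (-t) - 1 < 0 := by
  have h1 : Real.exp (-t) < 1 := by simpa using ht
  have h2 := Real.exp_pos (-t)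
  have h3 := Real.add_one_le_exp (-t)
  rw [abs_of_neg (by linarith)]
  exact ⟨by linarith, by linarith, by linarith⟩

lemma hs_hasSum_pow (x t : ℝ) (ht : 0 < t) :
    HasSum (fun n => genBinom x n * (Real.exp (-t) - 1) ^ n) (Real.exp (-(x * t))) := by
  have h := (Real.one_add_rpow_hasFPowerSeriesOnBall_zero (a := x)).hasSum
    (y := Real.exp (-t) - 1) (by
      rw [← ENNReal.ofReal_one, Metric.eball_ofReal]
      simpa using (hs_u t ht).1)
  have e : (1 + (0 + (Real.exp (-t) - 1))) ^ x = Real.exp (-(x * t)) := by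
    rw [show 1 + (0 + (Real.exp (-t) - 1)) = Real.exp (-t) by ring, ← Real.exp_mul]
    ring_nf
  rw [e] at h
  have e2 : (fun n => genBinom x n * (Real.exp (-t) - 1) ^ n) = fun n : ℕ =>
      (binomialSeries ℝ x n fun _ => Real.exp (-t) - 1) := by
    ext n
    rw [binomialSeries_apply, hs_genBinom_eq]
    simp
  rw [e2]
  exact h

lemma hs_hasSum (x t : ℝ) (ht : 0 < t) :
    HasSum (fun n => genBinom x (n + 2) * (Real.exp (-t) / t) * (Real.exp (-t) - 1) ^ (n + 1))
      (hsH x t) := by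
  have h := hs_hasSum_pow x t ht
  have h2 := (hasSum_nat_add_iff' 2).2 h
  have hu := (hs_u t ht).2.2
  have h3 := h2.mul_left ((Real.exp (-t) / t) / (Real.exp (-t) - 1))
  have hne := hu.ne
  have e1 : (fun n => genBinom x (n + 2) * (Real.exp (-t) / t) * (Real.exp (-t) - 1) ^ (n + 1)) =
      fun i => Real.exp (-t) / t / (Real.exp (-t) - 1) *
        (genBinom x (i + 2) * (Real.exp (-t) - 1) ^ (i + 2)) := by
    ext n
    field_simp
    ring
  have e2 : hsH x t = Real.exp (-t) / t / (Real.exp (-t) - 1) *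
      (Real.exp (-(x * t)) -
        ∑ i ∈ Finset.range 2, genBinom x i * (Real.exp (-t) - 1) ^ i) := by
    simp only [hsH, Finset.sum_range_succ, Finset.sum_range_zero, genBinom]
    norm_num
    field_simp
    ring
  rw [e1, e2]
  exact h3

lemma hs_bound (x t : ℝ) (ht : 0 < t) (n : ℕ) :
    ‖genBinom x (n + 2) * (Real.exp (-t) / t) * (Real.exp (-t) - 1) ^ (n + 1)‖ ≤
      |genBinom x (n + 2)| * Real.exp (-t) := by
  obtain ⟨h1, h2, h3⟩ := hs_u t ht
  rw [Real.norm_eq_abs, abs_mul, abs_mul, abs_pow, abs_of_pos (by positivity : 0 < Real.exp (-t) / t),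
    mul_assoc]
  gcongr
  have h4 : |Real.exp (-t) - 1| ^ (n + 1) ≤ t := by
    rw [pow_succ]
    calc _ ≤ 1 * |Real.exp (-t) - 1| := by
            gcongr
            exact pow_le_one₀ (abs_nonneg _) h1.le
      _ ≤ t := by linarith
  calc Real.exp (-t) / t * |Real.exp (-t) - 1| ^ (n + 1) ≤ Real.exp (-t) / t * t := by gcongr
    _ = Real.exp (-t) := by field_simp

lemma hs_integrable (x : ℝ) (n : ℕ) :
    IntegrableOn (fun t : ℝ => genBinom x (n + 2) * (Real.exp (-t) / t) *
      (Real.exp (-t) - 1) ^ (n + 1)) (Ioi 0) := by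
  apply Integrable.mono' ((integrableOn_exp_neg_Ioi 0).const_mul |genBinom x (n + 2)|)
  · exact (by fun_prop : Measurable _).aestronglyMeasurable
  · filter_upwards [ae_restrict_mem measurableSet_Ioi] with t ht
    exact hs_bound x t ht n

lemma hs_summable2 (x : ℝ) (hx : 0 < x) : Summable (fun n => |genBinom x (n + 2)|) :=
  (summable_nat_add_iff 2).2 (hs_summable x hx)

lemma hs_H_integrable (x : ℝ) (hx : 0 < x) : IntegrableOn (hsH x) (Ioi 0) := by
  have hs := hs_summable2 x hx
  apply Integrable.mono' ((integrableOn_exp_neg_Ioi 0).const_mul (∑' n, |genBinom x (n + 2)|))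
  · unfold hsH
    exact (by fun_prop : Measurable _).aestronglyMeasurable
  · filter_upwards [ae_restrict_mem measurableSet_Ioi] with t ht
    rw [← (hs_hasSum x t ht).tsum_eq, ← tsum_mul_right]
    exact tsum_of_norm_bounded (hs.mul_right _).hasSum (hs_bound x t ht)

lemma hs_hasSum_integral (x : ℝ) (hx : 0 < x) :
    HasSum (fun n => ∫ t in Ioi (0:ℝ), genBinom x (n + 2) * (Real.exp (-t) / t) *
      (Real.exp (-t) - 1) ^ (n + 1)) (∫ t in Ioi (0:ℝ), hsH x t) := by
  have h := hasSum_integral_of_summable_integral_norm (μ := volume.restrict (Ioi (0:ℝ)))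
    (fun n => hs_integrable x n) (by
      apply Summable.of_nonneg_of_le _ _ (hs_summable2 x hx)
      · intro n; exact integral_nonneg (fun t => norm_nonneg _)
      · intro n
        calc _ ≤ ∫ t in Ioi (0:ℝ), |genBinom x (n + 2)| * Real.exp (-t) := by
              apply setIntegral_mono_on (hs_integrable x n).norm
                ((integrableOn_exp_neg_Ioi 0).const_mul _) measurableSet_Ioi
              intro t ht
              exact hs_bound x t ht n
          _ = _ := by
              rw [integral_const_mul, integral_exp_neg_Ioi_zero, mul_one])
  have e : ∫ t in Ioi (0:ℝ), hsH x t = ∫ t in Ioi (0:ℝ), ∑' n : ℕ, genBinom x (n + 2) *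
      (Real.exp (-t) / t) * (Real.exp (-t) - 1) ^ (n + 1) := by
    apply setIntegral_congr_fun measurableSet_Ioi
    intro t ht
    exact (hs_hasSum x t ht).tsum_eq.symm
  rw [e]
  exact h

lemma hs_feq (x : ℝ) (hx : 0 < x) :
    ∫ t in Ioi (0:ℝ), hsH (x + 1) t = (∫ t in Ioi (0:ℝ), hsH x t) - Real.log (x + 1) := by
  have i1 := hs_H_integrable x hx
  have i2 := hs_H_integrable (x + 1) (by linarith)
  have e : EqOn (fun t => hsH x t - hsH (x + 1) t)
      (fun t => t⁻¹ • ((fun s => Real.exp (-s)) (1 * t) - (fun s => Real.exp (-s)) ((x + 1) * t)))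
      (Ioi 0) := by
    intro t ht
    have ht : 0 < t := ht
    have hu := (hs_u t ht).2.2.ne
    have : Real.exp (-((x + 1) * t)) = Real.exp (-(x * t)) * Real.exp (-t) := by
      rw [← Real.exp_add]; ring_nf
    simp only [hsH, this, smul_eq_mul, one_mul]
    field_simp
    ring
  have f := Frullani.integral_Ioi_eq (f := fun s : ℝ => Real.exp (-s)) (a := 1) (b := x + 1)
    (L := 1) (R := 0)
    ((by fun_prop : Continuous fun s : ℝ => Real.exp (-s)).locallyIntegrable.locallyIntegrableOn _)
    one_pos (by linarith)
    (by
      have : Tendsto (fun s : ℝ => Real.exp (-s)) (𝓝 0) (𝓝 (Real.exp (-0))) :=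
        (by fun_prop : Continuous fun s : ℝ => Real.exp (-s)).tendsto 0
      simp only [neg_zero, Real.exp_zero] at this
      exact this.mono_left nhdsWithin_le_nhds)
    (Real.tendsto_exp_atBot.comp tendsto_neg_atTop_atBot)
    ((integrableOn_congr_fun e measurableSet_Ioi).1 (i1.sub i2))
  rw [← setIntegral_congr_fun measurableSet_Ioi e, integral_sub i1 i2] at f
  simp at f
  linarith

lemma hs_convex (t : ℝ) (ht : 0 < t) {x y a b : ℝ} (ha : 0 ≤ a) (hb : 0 ≤ b) (hab : a + b = 1) :
    a * hsH x t + b * hsH y t ≤ hsH (a * x + b * y) t := by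
  have hu := (hs_u t ht).2.2
  have hc := convexOn_exp.2 (mem_univ (-(x * t))) (mem_univ (-(y * t))) ha hb hab
  simp only [smul_eq_mul] at hc
  have e : a * -(x * t) + b * -(y * t) = -((a * x + b * y) * t) := by ring
  rw [e] at hc
  simp only [hsH]
  have : 0 ≤ Real.exp (-t) / t := by positivity
  calc _ = (Real.exp (-t) / t) * ((a * Real.exp (-(x * t)) + b * Real.exp (-(y * t)) - (a + b)) /
      (Real.exp (-t) - 1) - (a * x + b * y)) := by ring
    _ ≤ _ := by
      rw [hab]
      apply mul_le_mul_of_nonneg_left _ this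
      apply sub_le_sub_right
      apply div_le_div_of_nonpos_of_le hu.le
      linarith

lemma hs_convexOn : ConvexOn ℝ (Ioi 0) (fun x => - ∫ t in Ioi (0:ℝ), hsH x t) := by
  refine ⟨convex_Ioi 0, ?_⟩
  intro x hx y hy a b ha hb hab
  have hx : 0 < x := hx
  have hy : 0 < y := hy
  have hz : 0 < a * x + b * y := (convex_Ioi (0:ℝ)) hx hy ha hb hab
  have ix := (hs_H_integrable x hx).const_mul a
  have iy := (hs_H_integrable y hy).const_mul b
  have h : ∫ t in Ioi (0:ℝ), (a * hsH x t + b * hsH y t) ≤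
      ∫ t in Ioi (0:ℝ), hsH (a * x + b * y) t :=
    setIntegral_mono_on (ix.add iy) (hs_H_integrable _ hz) measurableSet_Ioi
      (fun t ht => hs_convex t ht ha hb hab)
  rw [integral_add ix iy, integral_const_mul, integral_const_mul] at h
  simp only [smul_eq_mul]
  linarith

lemma hs_gamma (x : ℝ) (hx : 0 < x) :
    ∫ t in Ioi (0:ℝ), hsH x t = - Real.log (Real.Gamma (x + 1)) := by
  have key : EqOn (fun y => Real.exp (- ∫ t in Ioi (0:ℝ), hsH y t) / y) Real.Gamma (Ioi 0) := by
    apply Real.eq_Gamma_of_log_convex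
    · have h2 := hs_convexOn.add strictConcaveOn_log_Ioi.concaveOn.neg
      apply h2.congr
      intro y hy
      have hy : 0 < y := hy
      simp only [Function.comp, Pi.add_apply, Pi.neg_apply]
      rw [Real.log_div (Real.exp_pos _).ne' hy.ne', Real.log_exp]
      ring
    · intro y hy
      have h1 : y + 1 ≠ 0 := by linarith
      have : -((∫ t in Ioi (0:ℝ), hsH y t) - Real.log (y + 1)) =
        -(∫ t in Ioi (0:ℝ), hsH y t) + Real.log (y + 1) := by ring
      simp only [hs_feq y hy, this, Real.exp_add, Real.exp_log (by linarith : 0 < y + 1)]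
      field_simp
    · intro y hy
      positivity
    · have : ∫ t in Ioi (0:ℝ), hsH 1 t = 0 := by
        apply setIntegral_eq_zero_of_forall_eq_zero
        intro t ht
        have hu := (hs_u t ht).2.2.ne
        simp [hsH, div_self hu]
      simp [this]
  have h := key hx
  simp only at h
  rw [Real.Gamma_add_one hx.ne', ← h, mul_div_cancel₀ _ hx.ne', Real.log_exp, neg_neg]

theorem hermite_series_log_gamma (x : ℝ) (hx : 0 < x) :
    (∀ n : ℕ, 2 ≤ n →
      MeasureTheory.IntegrableOn
        (fun t : ℝ => genBinom x n * (Real.exp (-t) / t) * (Real.exp (-t) - 1) ^ (n - 1))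
        (Set.Ioi 0)) ∧
    Filter.Tendsto
      (fun N => ∑ n ∈ Finset.Icc 2 N,
        ∫ t in Set.Ioi (0 : ℝ),
          genBinom x n * (Real.exp (-t) / t) * (Real.exp (-t) - 1) ^ (n - 1))
      Filter.atTop (nhds (-Real.log (Real.Gamma (x + 1)))) := by
  constructor
  · intro n hn
    obtain ⟨m, rfl⟩ := Nat.exists_eq_add_of_le' hn
    exact hs_integrable x m
  · have h := (hs_hasSum_integral x hx).tendsto_sum_nat
    rw [hs_gamma x hx] at h
    rw [← tendsto_add_atTop_iff_nat 1]
    refine h.congr (fun N => ?_)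
    have e : Finset.Icc 2 (N + 1) = Finset.Ico 2 (N + 2) := by
      ext k; simp only [Finset.mem_Icc, Finset.mem_Ico]; omega
    rw [e, Finset.sum_Ico_eq_sum_range, Nat.add_sub_cancel]
    apply Finset.sum_congr rfl
    intro k _
    rw [Nat.add_comm 2 k]
    rfl
end
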